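/- Let m > 1 and p be odd integers and let n be a positive integer. Let d₃ be the squarefree part of −(3^m p^{2n} + 4). Then 3 divides the class number of the imaginary quadratic field ℚ(√d₃). -/

import Mathlib

section ringpart
variable {A B : Type*} [CommRing A] [CommRing B] [IsDomain B] [Algebra A B]

theorem aux_units (s : B ≃ₐ[A] B) (hs : ∀ x, s (s (s x)) = x)
    (hinj : Function.Injective (algebraMap A B))
    (hfix : ∀ x, s x = x → ∃ a, algebraMap A B a = x)
    (hA : ∀ u : Aˣ, ∃ y, y ^ 3 = u)
    (H : ∀ η : Bˣ, (η : B) * s η * s (s η) = 1 → ∃ ε : Bˣ, (ε : B) = η * s ε) :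
    ∀ u : Bˣ, ∃ v : Bˣ, u = v ^ 3 := by
  let S : Bˣ →* Bˣ := Units.map (s : B →* B)
  have hSv : ∀ u : Bˣ, ((S u : Bˣ) : B) = s u := fun u => rfl
  have hS : ∀ u, S (S (S u)) = u := fun u => Units.ext (hs u)
  have dec : ∀ u : Bˣ, ∃ e y : Bˣ, u = e * y ^ 3 ∧ e * S e * S (S e) = 1 ∧ S y = y := by
    intro u
    have fixN : ∀ u : Bˣ, ∃ a, algebraMap A B a = ((u * S u * S (S u) : Bˣ) : B) := by
      intro u
      apply hfix
      rw [← hSv, map_mul, map_mul, hS]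
      congr 1
      rw [mul_comm (S u * _), mul_assoc]
    obtain ⟨a, ha⟩ := fixN u
    obtain ⟨b, hb⟩ := fixN u⁻¹
    have hab : a * b = 1 := by
      apply hinj
      rw [map_mul, ha, hb, map_one, ← Units.val_mul, ← Units.val_one]
      congr 1
      simp only [map_inv]
      rw [← mul_inv, ← mul_inv, mul_inv_cancel]
    obtain ⟨y, hy⟩ := hA (Units.mkOfMulEqOne a b hab)
    obtain ⟨z, hz⟩ := hA y
    let Z : Bˣ := Units.map (algebraMap A B : A →* B) z
    have hSZ : S Z = Z := Units.ext (s.commutes _)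
    have hZ : Z ^ 9 = u * S u * S (S u) := by
      rw [Units.ext_iff, ← ha]
      have : a = ((z ^ 9 : Aˣ) : A) := by
        rw [show z ^ 9 = (z ^ 3) ^ 3 by rw [← pow_mul], hz, hy]; rfl
      rw [this]; simp [Z]
    refine ⟨u * (Z ^ 3)⁻¹, Z, by simp, ?_, hSZ⟩
    simp only [map_mul, map_inv, map_pow, hSZ]
    calc _ = u * S u * S (S u) * (Z ^ 9)⁻¹ := by
            rw [show Z ^ 9 = Z ^ 3 * Z ^ 3 * Z ^ 3 by rw [← pow_add, ← pow_add]]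
            simp only [mul_inv]
            ac_rfl
      _ = 1 := by rw [hZ, mul_inv_cancel]
  have key : ∀ e : Bˣ, e * S e * S (S e) = 1 →
      ∃ e' : Bˣ, e' * S e' * S (S e') = 1 ∧ e = e' * (S e')⁻¹ := by
    intro e he
    obtain ⟨ε, hε⟩ := H e (by simpa [hSv] using congrArg Units.val he)
    obtain ⟨e', y, rfl, h1, h2⟩ := dec ε
    refine ⟨e', h1, ?_⟩
    have h3 : e' * y ^ 3 = e * S (e' * y ^ 3) := Units.ext hε
    rw [map_mul, map_pow, h2, ← mul_assoc] at h3
    exact eq_mul_inv_of_mul_eq (mul_right_cancel h3).symm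
  intro u
  obtain ⟨e, y, rfl, he, -⟩ := dec u
  obtain ⟨e1, h1, rfl⟩ := key e he
  obtain ⟨e2, h2, rfl⟩ := key e1 h1
  refine ⟨(S e2)⁻¹ * y, ?_⟩
  rw [mul_pow]
  congr 1
  simp only [map_mul, map_inv, mul_inv, inv_inv]
  calc _ = (e2 * S e2 * S (S e2)) * ((S e2)⁻¹ ^ 3) := by
        rw [pow_three, mul_right_comm e2 (S e2) (S (S e2)), mul_assoc (e2 * S (S e2)), mul_inv_cancel_left]
        ac_rfl
    _ = _ := by rw [h2, one_mul]

theorem aux_descent (s : B ≃ₐ[A] B) (hs : ∀ x, s (s (s x)) = x)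
    (hfix : ∀ x, s x = x → ∃ a, algebraMap A B a = x)
    (θ : B) (h1 : θ + s θ + s (s θ) = 0) (h2 : θ * s θ + s θ * s (s θ) + s (s θ) * θ = 1)
    (J : Ideal B) (hJ : ∀ x ∈ J, s x ∈ J) :
    (J.comap (algebraMap A B)).map (algebraMap A B) = J := by
  refine le_antisymm Ideal.map_comap_le ?_
  intro j hj
  have tr : ∀ x ∈ J, x + s x + s (s x) ∈ (J.comap (algebraMap A B)).map (algebraMap A B) := by
    intro x hx
    obtain ⟨a, ha⟩ := hfix (x + s x + s (s x)) (by simp only [map_add, hs]; ring)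
    rw [← ha]
    apply Ideal.mem_map_of_mem
    rw [Ideal.mem_comap, ha]
    exact J.add_mem (J.add_mem hx (hJ _ hx)) (hJ _ (hJ _ hx))
  -- products `(y - s y) (y' - s² y') j`
  have prod : ∀ y z : B, (y - s y) * (z - s (s z)) * j ∈
      (J.comap (algebraMap A B)).map (algebraMap A B) := by
    intro y z
    have e : (y - s y) * (z - s (s z)) * j
      = (y * z * j + s (y * z * j) + s (s (y * z * j)))
        - s y * (z * j + s (z * j) + s (s (z * j)))
        - s (s z) * (y * j + s (y * j) + s (s (y * j)))
        + s y * s (s z) * (j + s j + s (s j)) := by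
      simp only [map_mul]; ring
    rw [e]
    refine Ideal.add_mem _ (Ideal.sub_mem _ (Ideal.sub_mem _ ?_ ?_) ?_) ?_
    · exact tr _ (J.mul_mem_left _ hj)
    · exact Ideal.mul_mem_left _ _ (tr _ (J.mul_mem_left _ hj))
    · exact Ideal.mul_mem_left _ _ (tr _ (J.mul_mem_left _ hj))
    · exact Ideal.mul_mem_left _ _ (tr _ hj)
  have p11 := prod θ θ
  have p12 := prod θ (s θ)
  have p21 := prod (s θ) θ
  have p22 := prod (s θ) (s θ)
  rw [hs] at p12 p22
  generalize s (s θ) = c at *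
  generalize s θ = b at *
  obtain rfl : c = -θ - b := by linear_combination h1
  have e : j = -((θ - b) * (θ + 2 * b) + 2 * (3 * b) * b - 2 * b ^ 2) *
        ((b - (-θ - b)) * (b - θ) * j) - b ^ 2 * ((θ - b) * (b - θ) * j)
        + b ^ 2 * ((b - (-θ - b)) * (θ - (-θ - b)) * j + (b - (-θ - b)) * (b - θ) * j) := by
    linear_combination (-(1 - (θ ^ 2 + θ * b + b ^ 2)) * j) * h2
  rw [e]
  refine Ideal.add_mem _ (Ideal.sub_mem _ ?_ ?_) ?_
  · exact Ideal.mul_mem_left _ _ p22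
  · exact Ideal.mul_mem_left _ _ p12
  · exact Ideal.mul_mem_left _ _ (Ideal.add_mem _ p21 p22)

theorem aux_h90 (s : B ≃ₐ[A] B) (hs : ∀ x, s (s (s x)) = x)
    (θ : B) (hθ : s θ ≠ θ) (η : B) (hη : η * s η * s (s η) = 1) :
    ∃ β : B, β ≠ 0 ∧ β = η * s β := by
  by_contra! hc
  have h : ∀ x, x + η * s x + η * s η * s (s x) = 0 := by
    intro x
    by_contra h0
    refine hc _ h0 ?_
    simp only [map_add, map_mul, hs]
    linear_combination (-x) * hη
  have e0 := h 1
  have e1 := h θ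
  have e2 := h (θ * θ)
  simp only [map_one, map_mul] at e0 e1 e2
  have : (θ - s θ) * (θ - s (s θ)) = 0 := by
    linear_combination e2 - (s θ + s (s θ)) * e1 + s θ * s (s θ) * e0
  rcases mul_eq_zero.1 this with h | h
  · exact hθ (sub_eq_zero.1 h).symm
  · apply hθ
    have := congrArg s (sub_eq_zero.1 h)
    rwa [hs] at this
end ringpart

theorem aux_basis {ι M : Type*} [AddCommGroup M] [Module ℤ M] (b : Module.Basis ι ℤ M) (i : ι)
    (y : M) (h : b i = y + (y + y)) : False := by
  have h4 := congrArg (fun z => b.repr z i) h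
  simp only [map_add, Finsupp.add_apply, Module.Basis.repr_self, Finsupp.single_eq_same] at h4
  omega

open NumberField in
theorem aux_core (K L : Type*) [Field K] [NumberField K] [Field L] [NumberField L] [Algebra K L]
    (s : 𝓞 L ≃ₐ[𝓞 K] 𝓞 L) (hs : ∀ x, s (s (s x)) = x)
    (hfix : ∀ x, s x = x → ∃ a, algebraMap (𝓞 K) (𝓞 L) a = x)
    (θ : 𝓞 L) (hθ : s θ ≠ θ) (h1 : θ + s θ + s (s θ) = 0)
    (h2 : θ * s θ + s θ * s (s θ) + s (s θ) * θ = 1)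
    (hA : ∀ u : (𝓞 K)ˣ, ∃ y, y ^ 3 = u)
    (hfin : Module.finrank (𝓞 K) (𝓞 L) = 3) (hr : 0 < Units.rank L) :
    3 ∣ classNumber K := by
  have hinj : Function.Injective (algebraMap (𝓞 K) (𝓞 L)) :=
    FaithfulSMul.algebraMap_injective _ _
  -- a unit of relative norm one which is not of the form `ε / s ε`
  have hex : ∃ η : (𝓞 L)ˣ, (η : 𝓞 L) * s η * s (s η) = 1 ∧
      ∀ ε : (𝓞 L)ˣ, (ε : 𝓞 L) ≠ η * s ε := by
    by_contra! H
    have hc := aux_units s hs hinj hfix hA H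
    let b := Units.basisModTorsion L
    let i : Fin (Units.rank L) := ⟨0, hr⟩
    obtain ⟨u, hu⟩ := QuotientGroup.mk_surjective (s := Units.torsion L) (b i).toMul
    obtain ⟨v, rfl⟩ := hc u
    let y : Additive ((𝓞 L)ˣ ⧸ Units.torsion L) := Additive.ofMul (QuotientGroup.mk v)
    have h3 : b i = y + (y + y) := by
      apply Additive.toMul.injective
      rw [← hu, pow_three]
      rfl
    exact aux_basis b i y h3
  obtain ⟨η, hη, hne⟩ := hex
  obtain ⟨β, hβ0, hβ⟩ := aux_h90 s hs θ hθ (η : 𝓞 L) hη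
  have hJ : ∀ x ∈ Ideal.span {β}, s x ∈ Ideal.span {β} := by
    intro x hx
    rw [Ideal.mem_span_singleton] at hx ⊢
    obtain ⟨y, rfl⟩ := hx
    rw [map_mul]
    refine Dvd.dvd.mul_right ?_ _
    refine ⟨((η⁻¹ : (𝓞 L)ˣ) : 𝓞 L), ?_⟩
    conv_rhs => rw [hβ]
    rw [mul_right_comm, Units.mul_inv, one_mul]
  have hmap := aux_descent s hs hfix θ h1 h2 (Ideal.span {β}) hJ
  set I : Ideal (𝓞 K) := (Ideal.span {β}).comap (algebraMap (𝓞 K) (𝓞 L)) with hI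
  have hI0 : I ≠ ⊥ := by
    intro h
    rw [h, Ideal.map_bot, eq_comm, Ideal.span_singleton_eq_bot] at hmap
    exact hβ0 hmap
  have hI0' : I ∈ nonZeroDivisors (Ideal (𝓞 K)) := mem_nonZeroDivisors_of_ne_zero hI0
  have hcube : I ^ 3 = Ideal.span {Algebra.intNorm (𝓞 K) (𝓞 L) β} := by
    rw [← Ideal.relNorm_singleton, ← hmap, Ideal.relNorm_algebraMap, hfin]
  have hnp : ClassGroup.mk0 ⟨I, hI0'⟩ ≠ 1 := by
    rw [Ne, ClassGroup.mk0_eq_one_iff hI0']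
    rintro ⟨a, ha⟩
    rw [Ideal.submodule_span_eq] at ha
    rw [ha, Ideal.map_span, Set.image_singleton, Ideal.span_singleton_eq_span_singleton] at hmap
    obtain ⟨ε, hε⟩ := hmap
    apply hne ε
    have ha0 : algebraMap (𝓞 K) (𝓞 L) a ≠ 0 := by
      intro h
      rw [h, zero_mul] at hε
      exact hβ0 hε.symm
    apply mul_left_cancel₀ ha0
    rw [hε]
    conv_lhs => rw [hβ, ← hε, map_mul, s.commutes]
    ring
  have ho : orderOf (ClassGroup.mk0 ⟨I, hI0'⟩) = 3 := by
    have : Fact (Nat.Prime 3) := ⟨Nat.prime_three⟩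
    refine orderOf_eq_prime ?_ hnp
    rw [← map_pow, show (⟨I, hI0'⟩ : nonZeroDivisors (Ideal (𝓞 K))) ^ 3
      = ⟨I ^ 3, pow_mem hI0' 3⟩ from rfl, ClassGroup.mk0_eq_one_iff, hcube]
    exact ⟨_, rfl⟩
  rw [← ho]
  exact orderOf_dvd_card

open NumberField in
theorem aux_galois (K L : Type*) [Field K] [NumberField K] [Field L] [NumberField L] [Algebra K L]
    [IsGalois K L] (h3 : Module.finrank K L = 3) (x : L) (c : ℤ) (hx : x ^ 3 + x + c = 0)
    (hgen : ∀ σ : L ≃ₐ[K] L, σ x = x → σ = 1)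
    (hA : ∀ u : (𝓞 K)ˣ, ∃ y, y ^ 3 = u) :
    3 ∣ classNumber K := by
  have : Fact (Nat.Prime 3) := ⟨Nat.prime_three⟩
  have hcard : Nat.card (L ≃ₐ[K] L) = 3 := by rw [IsGalois.card_aut_eq_finrank, h3]
  have : Nontrivial (L ≃ₐ[K] L) := (Finite.one_lt_card_iff_nontrivial).1 (by omega)
  obtain ⟨σ, hσ⟩ := exists_ne (1 : L ≃ₐ[K] L)
  have hσ3 : σ ^ 3 = 1 := by rw [← hcard]; exact pow_card_eq_one'
  have hσ3' : ∀ y, σ (σ (σ y)) = y := fun y => by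
    have := congrArg (fun τ : L ≃ₐ[K] L => τ y) hσ3
    simpa [pow_three] using this
  have hzp : ∀ τ : L ≃ₐ[K] L, τ ∈ Subgroup.zpowers σ := fun τ =>
    mem_zpowers_of_prime_card hcard hσ
  have hxint : IsIntegral ℤ x := by
    refine ⟨Polynomial.X ^ 3 + Polynomial.X + Polynomial.C c, by monicity!, ?_⟩
    rw [Polynomial.eval₂_add, Polynomial.eval₂_add, Polynomial.eval₂_C]
    simpa using hx
  let s : 𝓞 L ≃ₐ[𝓞 K] 𝓞 L := RingOfIntegers.mapAlgEquiv σ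
  have hsv : ∀ y : 𝓞 L, ((s y : 𝓞 L) : L) = σ (y : L) := fun y => rfl
  let θ : 𝓞 L := ⟨x, hxint⟩
  have hθ : (θ : L) = x := rfl
  have hne1 : σ x ≠ x := fun h => hσ (hgen σ h)
  have hne2 : σ (σ x) ≠ x := fun h => hne1 (by
    have := congrArg σ h
    rw [hσ3'] at this
    exact this.symm)
  have hne3 : σ (σ x) ≠ σ x := fun h => hne1 (σ.injective h)
  have hy : (σ x) ^ 3 + σ x + c = 0 := by simpa using congrArg σ hx
  have hz : (σ (σ x)) ^ 3 + σ (σ x) + c = 0 := by simpa using congrArg σ hy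
  have q1 : (σ x) ^ 2 + σ x * x + x ^ 2 + 1 = 0 := by
    apply mul_left_cancel₀ (sub_ne_zero.2 hne1)
    linear_combination hy - hx
  have q2 : (σ (σ x)) ^ 2 + σ (σ x) * x + x ^ 2 + 1 = 0 := by
    apply mul_left_cancel₀ (sub_ne_zero.2 hne2)
    linear_combination hz - hx
  have q3 : x + σ x + σ (σ x) = 0 := by
    apply mul_left_cancel₀ (sub_ne_zero.2 hne3)
    linear_combination q2 - q1
  refine aux_core K L s ?_ ?_ θ ?_ ?_ ?_ hA ?_ ?_
  · intro y
    apply RingOfIntegers.ext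
    simp only [hsv, hσ3']
  · intro y hy
    have hy' : σ (y : L) = y := by rw [← hsv, hy]
    have : (y : L) ∈ Set.range (algebraMap K L) := by
      rw [IsGalois.mem_range_algebraMap_iff_fixed]
      intro τ
      have : Subgroup.zpowers σ ≤ MulAction.stabilizer (L ≃ₐ[K] L) (y : L) := by
        rw [Subgroup.zpowers_le]; exact hy'
      exact this (hzp τ)
    obtain ⟨a, ha⟩ := this
    have haint : IsIntegral ℤ a := by
      have : IsIntegral ℤ (algebraMap K L a) := by rw [ha]; exact y.2
      exact (isIntegral_algebraMap_iff (algebraMap K L).injective).1 this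
    exact ⟨⟨a, haint⟩, RingOfIntegers.ext ha⟩
  · intro h
    exact hne1 (by rw [← hθ, ← hsv, h])
  · apply RingOfIntegers.ext
    simp only [map_add, hsv, hθ, map_zero]
    exact q3
  · apply RingOfIntegers.ext
    simp only [map_add, map_mul, hsv, hθ, map_one]
    linear_combination (-σ x - x) * (-q3) - q1
  · rw [← h3, IsFractionRing.finrank_eq (𝓞 K) K (𝓞 L) L]
  · have e1 := InfinitePlace.card_eq_nrRealPlaces_add_nrComplexPlaces L
    have e2 := InfinitePlace.card_add_two_mul_card_eq_rank L
    have e3 : 0 < Module.finrank ℚ K := Module.finrank_pos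
    have e4 := Module.finrank_mul_finrank ℚ K L
    rw [h3] at e4
    unfold Units.rank
    omega

theorem aux_noroot (K : Type*) [Field K] [NumberField K] (hdeg : Module.finrank ℚ K = 2)
    (c : ℤ) (hc : Odd c) (x : K) (hx : x ^ 3 + x + c = 0) : False := by
  let f : Polynomial ℚ := Polynomial.X ^ 3 + Polynomial.X + Polynomial.C (c : ℚ)
  have hnd : f.natDegree = 3 := by unfold f; compute_degree!
  have hmon : f.Monic := by unfold f; monicity!
  have hirr : Irreducible f := by
    apply Polynomial.irreducible_of_degree_le_three_of_not_isRoot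
    · rw [hnd]; decide
    · intro r hr
      have hr' : r ^ 3 + r + c = 0 := by simpa [f] using hr
      have hint : IsIntegral ℤ r := by
        refine ⟨Polynomial.X ^ 3 + Polynomial.X + Polynomial.C c, by monicity!, ?_⟩
        rw [Polynomial.eval₂_add, Polynomial.eval₂_add, Polynomial.eval₂_C]
        simpa using hr'
      obtain ⟨k, rfl⟩ := IsIntegrallyClosed.isIntegral_iff.1 hint
      have hk : k ^ 3 + k + c = 0 := by
        have : ((k ^ 3 + k + c : ℤ) : ℚ) = 0 := by push_cast; simpa using hr'
        exact_mod_cast this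
      have : Even (k ^ 3 + k) := by
        rcases Int.even_or_odd k with h | h
        · exact (h.pow_of_ne_zero (by norm_num)).add h
        · exact h.pow.add_odd h
      have h2 := this.add_odd hc
      rw [hk] at h2
      exact absurd h2 (by decide)
  have hmp : f = minpoly ℚ x := by
    apply minpoly.eq_of_irreducible_of_monic hirr _ hmon
    simpa [f] using hx
  have := minpoly.degree_dvd (Algebra.IsIntegral.isIntegral (R := ℚ) x)
  rw [← hmp, hnd, hdeg] at this
  omega

theorem aux_sq (K : Type*) [Field K] [NumberField K] (hdeg : Module.finrank ℚ K = 2)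
    (d : ℤ) (hd : d < 0) (hd3 : ¬ (3 : ℤ) ∣ d) (α : K) (hα : α ^ 2 = (d : K))
    (w : K) (hw : w ^ 2 = -3) : False := by
  have hind : ∀ a b : ℚ, (a : K) + b * α = 0 → a = 0 ∧ b = 0 := by
    intro a b h
    have h1 : ((a ^ 2 : ℚ) : K) = ((b ^ 2 * d : ℚ) : K) := by
      push_cast
      rw [← hα]
      linear_combination (a - b * α) * h
    have h2 : a ^ 2 = b ^ 2 * d := by exact_mod_cast h1
    have hd' : (d : ℚ) < 0 := by exact_mod_cast hd
    have hb : b = 0 := by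
      by_contra hb
      have : 0 < b ^ 2 := by positivity
      nlinarith [sq_nonneg a]
    subst hb
    refine ⟨?_, rfl⟩
    simpa using h2
  have hli : LinearIndependent ℚ ![(1 : K), α] := by
    rw [LinearIndependent.pair_iff]
    intro a b h
    apply hind
    simpa [Algebra.smul_def] using h
  have hspan := hli.span_eq_top_of_card_eq_finrank (by simp [hdeg])
  have hwm : w ∈ Submodule.span ℚ (Set.range ![(1 : K), α]) := by rw [hspan]; trivial
  rw [Matrix.range_cons, Matrix.range_cons, Matrix.range_empty, Set.union_empty,
    Set.singleton_union, Submodule.mem_span_pair] at hwm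
  obtain ⟨a, b, hab⟩ := hwm
  have hab' : (a : K) + b * α = w := by simpa [Algebra.smul_def] using hab
  obtain ⟨e1, e2⟩ := hind (a ^ 2 + b ^ 2 * d + 3) (2 * a * b) (by
    push_cast
    rw [← hα]
    have : w ^ 2 + 3 = 0 := by rw [hw]; ring
    rw [← hab'] at this
    linear_combination this)
  have hb3 : b ^ 2 * d = -3 := by
    rcases mul_eq_zero.1 e2 with h | h
    · have : a = 0 := by linarith
      subst this; linarith
    · subst h; nlinarith [sq_nonneg a]
  have hb0 : (b.den : ℚ) ≠ 0 := by exact_mod_cast b.den_ne_zero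
  have hnum : b.num ^ 2 * d = -3 * (b.den : ℤ) ^ 2 := by
    have : (b.num : ℚ) ^ 2 * d = -3 * (b.den : ℚ) ^ 2 := by
      rw [← hb3]
      have : (b.num : ℚ) = b * b.den := (Rat.mul_den_eq_num b).symm
      rw [this]; ring
    exact_mod_cast this
  have p3 : Prime (3 : ℤ) := Int.prime_three
  have hn3 : (3 : ℤ) ∣ b.num := by
    have : (3 : ℤ) ∣ b.num ^ 2 * d := ⟨-(b.den : ℤ) ^ 2, by rw [hnum]; ring⟩
    exact p3.dvd_of_dvd_pow ((p3.dvd_or_dvd this).resolve_right hd3)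
  have hdn3 : (3 : ℤ) ∣ (b.den : ℤ) := by
    obtain ⟨k, hk⟩ := hn3
    rw [hk] at hnum
    apply p3.dvd_of_dvd_pow (n := 2)
    exact ⟨-(k ^ 2 * d), by linarith⟩
  have hcop := b.reduced
  have h1 : 3 ∣ b.num.natAbs := Int.natCast_dvd.1 (by exact_mod_cast hn3)
  have h2 : 3 ∣ b.den := by exact_mod_cast hdn3
  have := Nat.dvd_gcd h1 h2
  rw [hcop] at this
  omega

open NumberField in
theorem aux_cubes (K : Type*) [Field K] [NumberField K] (hdeg : Module.finrank ℚ K = 2)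
    (d : ℤ) (hd : d < 0) (hd3 : ¬ (3 : ℤ) ∣ d) (α : K) (hα : α ^ 2 = (d : K)) :
    ∀ u : (𝓞 K)ˣ, ∃ y, y ^ 3 = u := by
  have hc : IsTotallyComplex K := ⟨fun v => by
    rw [← InfinitePlace.not_isReal_iff_isComplex]
    intro hv
    have h := congrArg (InfinitePlace.embedding_of_isReal hv) hα
    rw [map_pow, map_intCast] at h
    have hd' : (d : ℝ) < 0 := by exact_mod_cast hd
    nlinarith [sq_nonneg (InfinitePlace.embedding_of_isReal hv α)]⟩
  have hrank : Units.rank K = 0 := by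
    have e1 := InfinitePlace.card_eq_nrRealPlaces_add_nrComplexPlaces K
    have e2 := InfinitePlace.card_add_two_mul_card_eq_rank K
    have e3 := IsTotallyComplex.nrRealPlaces_eq_zero K
    unfold Units.rank
    omega
  have htors : ∀ u : (𝓞 K)ˣ, u ∈ Units.torsion K := by
    intro u
    obtain ⟨⟨ζ, e⟩, h, -⟩ := Units.exist_unique_eq_mul_prod K u
    have : IsEmpty (Fin (Units.rank K)) := by rw [hrank]; infer_instance
    simp only [Finset.univ_eq_empty, Finset.prod_empty, mul_one] at h
    rw [h]
    exact ζ.2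
  have hinj : Function.Injective (powMonoidHom 3 : Units.torsion K →* Units.torsion K) := by
    rw [injective_iff_map_eq_one]
    rintro ⟨ζ, hζ⟩ h
    have h3 : ζ ^ 3 = 1 := by simpa [Subtype.ext_iff] using h
    have h3' : (((ζ : 𝓞 K) : K)) ^ 3 = 1 := by
      have := congrArg (fun z : (𝓞 K)ˣ => ((z : 𝓞 K) : K)) h3
      simpa using this
    suffices hz : ((ζ : 𝓞 K) : K) = 1 by
      apply Subtype.ext
      apply Units.ext
      apply RingOfIntegers.ext
      simpa using hz
    by_contra hne
    have hq : ((ζ : 𝓞 K) : K) ^ 2 + ((ζ : 𝓞 K) : K) + 1 = 0 := by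
      apply mul_left_cancel₀ (sub_ne_zero.2 hne)
      linear_combination h3'
    refine aux_sq K hdeg d hd hd3 α hα (2 * ((ζ : 𝓞 K) : K) + 1) ?_
    linear_combination 4 * hq
  have hsurj := Finite.injective_iff_surjective.1 hinj
  intro u
  obtain ⟨y, hy⟩ := hsurj ⟨u, htors u⟩
  exact ⟨y, by simpa [Subtype.ext_iff] using hy⟩

theorem aux_split (K L : Type*) [Field K] [CharZero K] [Field L] [CharZero L] [Algebra K L]
    (c : ℤ) (δ : K) (hδ : δ ^ 2 = -(27 * (c : K) ^ 2 + 4)) (x : L) (hx : x ^ 3 + x + (c : L) = 0)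
    (f : Polynomial K) (hf : f = Polynomial.X ^ 3 + Polynomial.X + Polynomial.C (c : K))
    (hmon : f.Monic) (htop : Algebra.adjoin K {x} = ⊤) :
    Polynomial.IsSplittingField K L f := by
  let D : L := algebraMap K L δ
  have hD : D ^ 2 = -(27 * (c : L) ^ 2 + 4) := by
    have := congrArg (algebraMap K L) hδ
    simp only [map_neg, map_add, map_mul, map_pow, map_intCast, map_ofNat] at this
    exact this
  have hu : 3 * x ^ 2 + 1 ≠ 0 := by
    intro h
    have h2 : (27 * (c : L) ^ 2 + 4) = 0 := by
      linear_combination (27 * (c - x ^ 3 - x)) * hx + (9 * x ^ 4 + 15 * x ^ 2 + 4) * h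
    have h3 : ((27 * c ^ 2 + 4 : ℤ) : L) = 0 := by push_cast; exact h2
    have h3 : (27 * c ^ 2 + 4 : ℤ) = 0 := Int.cast_eq_zero.1 h3
    nlinarith [sq_nonneg c]
  let y : L := (-x + D / (3 * x ^ 2 + 1)) / 2
  let z : L := (-x - D / (3 * x ^ 2 + 1)) / 2
  have hyz : y + z = -x := by simp only [y, z]; ring
  have hDq : (D / (3 * x ^ 2 + 1)) ^ 2 = -(3 * x ^ 2 + 4) := by
    rw [div_pow, hD, div_eq_iff (pow_ne_zero 2 hu)]
    linear_combination (-27 * (c - x ^ 3 - x)) * hx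
  have hyz' : y * z = x ^ 2 + 1 := by
    simp only [y, z]
    linear_combination (-1 / 4 : L) * hDq
  have hfac : f.map (algebraMap K L) =
      (Polynomial.X - Polynomial.C x) * (Polynomial.X - Polynomial.C y) *
        (Polynomial.X - Polynomial.C z) := by
    have hcL : (c : L) = -(x * (y * z)) := by rw [hyz']; linear_combination hx
    have e1 : Polynomial.C y + Polynomial.C z = -Polynomial.C x := by
      rw [← Polynomial.C_add, hyz, Polynomial.C_neg]
    have e2 : Polynomial.C y * Polynomial.C z = Polynomial.C x ^ 2 + 1 := by
      rw [← Polynomial.C_mul, hyz']; simp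
    have e3 : f.map (algebraMap K L) = Polynomial.X ^ 3 + Polynomial.X + Polynomial.C (c : L) := by
      simp only [hf, Polynomial.map_add, Polynomial.map_pow, Polynomial.map_X, Polynomial.map_C]
      rw [map_intCast (algebraMap K L)]
    rw [e3, hcL, hyz']
    simp only [Polynomial.C_neg, Polynomial.C_mul, Polynomial.C_add, Polynomial.C_pow,
      Polynomial.C_1]
    linear_combination (Polynomial.X ^ 2 - Polynomial.C x * Polynomial.X) * e1
      + (Polynomial.C x - Polynomial.X) * e2
  · refine ⟨?_, ?_⟩
    · rw [hfac]
      exact ((Polynomial.Splits.X_sub_C x).mul (Polynomial.Splits.X_sub_C y)).mul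
        (Polynomial.Splits.X_sub_C z)
    · rw [eq_top_iff, ← htop]
      apply Algebra.adjoin_mono
      rw [Set.singleton_subset_iff, Polynomial.mem_rootSet]
      refine ⟨hmon.ne_zero, ?_⟩
      simp only [hf, Polynomial.aeval_def, Polynomial.eval₂_add, Polynomial.eval₂_C,
        Polynomial.eval₂_X_pow, Polynomial.eval₂_X]
      rw [map_intCast (algebraMap K L)]
      exact hx

theorem aux_main (K : Type*) [Field K] [NumberField K] (hdeg : Module.finrank ℚ K = 2)
    (c : ℤ) (hc : Odd c) (d : ℤ) (hd : d < 0) (hd3 : ¬ (3 : ℤ) ∣ d) (α : K) (hα : α ^ 2 = (d : K))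
    (δ : K) (hδ : δ ^ 2 = -(27 * (c : K) ^ 2 + 4)) : 3 ∣ NumberField.classNumber K := by
  let f : Polynomial K := Polynomial.X ^ 3 + Polynomial.X + Polynomial.C (c : K)
  have hnd : f.natDegree = 3 := by unfold f; compute_degree!
  have hmon : f.Monic := by unfold f; monicity!
  have hirr : Irreducible f := by
    apply Polynomial.irreducible_of_degree_le_three_of_not_isRoot
    · rw [hnd]; decide
    · intro r hr
      exact aux_noroot K hdeg c hc r (by simpa [f] using hr)
  have : Fact (Irreducible f) := ⟨hirr⟩
  let L := AdjoinRoot f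
  have hfin : Module.Finite K L := hmon.finite_adjoinRoot
  have : NumberField L := NumberField.of_module_finite K L
  let x : L := AdjoinRoot.root f
  have hx : x ^ 3 + x + (c : L) = 0 := by
    have := AdjoinRoot.eval₂_root f
    simp only [f, Polynomial.eval₂_add, Polynomial.eval₂_C,
      Polynomial.eval₂_X_pow, Polynomial.eval₂_X] at this
    rw [map_intCast (AdjoinRoot.of f) c] at this
    exact this
  have hrank : Module.finrank K L = 3 := by
    rw [(AdjoinRoot.powerBasis hmon.ne_zero).finrank, AdjoinRoot.powerBasis_dim, hnd]
  have hsplit : Polynomial.IsSplittingField K L f :=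
    aux_split K L c δ hδ x hx f rfl hmon AdjoinRoot.adjoinRoot_eq_top
  have hgal : IsGalois K L := IsGalois.of_separable_splitting_field (p := f) hirr.separable
  refine aux_galois K L hrank x c hx ?_ (aux_cubes K hdeg d hd hd3 α hα)
  intro σ hσ
  have : (σ : L →ₐ[K] L) = AlgHom.id K L := AdjoinRoot.algHom_ext hσ
  ext w
  exact DFunLike.congr_fun this w

/-- Let `m > 1` and `p` be odd integers and `n` a positive integer.  If `d₃` is the squarefree
part of `-(3 ^ m * p ^ (2 * n) + 4)`, then `3` divides the class number of `ℚ(√d₃)`. -/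
theorem class_number_div_three_of_sqrt_sqfree_part_neg_three_pow_mul_sq_pow_add_four
    (m : ℕ) (hm : 1 < m) (hmodd : Odd m) (p : ℤ) (hpodd : Odd p)
    (n : ℕ) (hn : 0 < n)
    (d₃ : ℤ) (hsf : Squarefree d₃) (t : ℤ) (ht : 0 < t)
    (hpart : -((3 : ℤ) ^ m * p ^ (2 * n) + 4) = t ^ 2 * d₃)
    (K : Type*) [Field K] [NumberField K] (hdeg : Module.finrank ℚ K = 2)
    (hsqrt : ∃ α : K, α ^ 2 = (d₃ : K)) :
    3 ∣ NumberField.classNumber K := by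
  obtain ⟨α, hα⟩ := hsqrt
  obtain ⟨k, hk⟩ := hmodd
  obtain ⟨j, rfl⟩ : ∃ j, k = j + 1 := ⟨k - 1, by omega⟩
  have hc : Odd ((3 : ℤ) ^ j * p ^ n) := (Odd.pow (by decide)).mul hpodd.pow
  have hN : (3 : ℤ) ^ m * p ^ (2 * n) = 27 * (3 ^ j * p ^ n) ^ 2 := by
    rw [hk]; ring
  generalize (3 : ℤ) ^ j * p ^ n = c at hc hN
  rw [hN] at hpart
  have hd : d₃ < 0 := by
    by_contra h
    push Not at h
    nlinarith [sq_nonneg c, mul_nonneg (sq_nonneg t) h]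
  have hd3 : ¬ (3 : ℤ) ∣ d₃ := by
    rintro ⟨e, rfl⟩
    have : (3 : ℤ) ∣ 4 := ⟨-(t ^ 2 * e) - 9 * c ^ 2, by linarith⟩
    omega
  refine aux_main K hdeg c hc d₃ hd hd3 α hα (t * α) ?_
  rw [mul_pow, hα]
  have := congrArg (Int.cast : ℤ → K) hpart
  push_cast at this
  exact this.symm
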